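/- Let λ=(λ_1,...,λ_l) be a partition of length l, let ξ_μ ∈ ℂ be arbitrary scalars for partitions μ with λ < μ, let τ(t) = s_λ(t) + Σ_{λ<μ} ξ_μ s_μ(t), and for 0 ≤ k ≤ l let τ^{(k)}(t) = s_{(λ_1,...,λ_k)}(t) + Σ_μ ξ_μ s_{(μ_1,...,μ_k)}(t), the sum over partitions μ=(μ_1,...,μ_l) with λ < μ and μ_i = λ_i for k+1 ≤ i ≤ l. Then ∂_1^{N_{λ,k}} τ(t) evaluated at t = [x_1]+⋯+[x_k] equals c'_{λ,k} · τ^{(k)}([x_1]+⋯+[x_k]) as formal power series in x_1,...,x_k, where c'_{λ,k} = (N_{λ,k}! / Π_{i=1}^{l−k} w_i!) · Π_{1≤i<j≤l−k}(w_j−w_i) with (w_l,...,w_1) = (λ_1,...,λ_l)+(l−1,...,1,0). -/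

import Mathlib

open MvPolynomial

noncomputable def pS (n : ℕ) : MvPolynomial ℕ ℂ :=
  ∑ m ∈ Finset.range (n + 1), (Nat.factorial m : ℂ)⁻¹ •
    ∑ c ∈ Finset.univ.filter
        (fun c : Fin m → Fin (n + 1) =>
          (∑ j, ((c j : ℕ))) = n ∧ ∀ j, 1 ≤ (c j : ℕ)),
      ∏ j, X ((c j : ℕ))

noncomputable def pz (n : ℤ) : MvPolynomial ℕ ℂ :=
  if 0 ≤ n then pS n.toNat else 0

noncomputable def schur {l : ℕ} (lam : Fin l → ℕ) : MvPolynomial ℕ ℂ :=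
  Matrix.det (Matrix.of fun a b : Fin l =>
    pz ((lam a : ℤ) - ((a : ℕ) : ℤ) + ((b : ℕ) : ℤ)))

def pad {l : ℕ} (lam : Fin l → ℕ) (a : ℕ) : ℕ := if h : a < l then lam ⟨a, h⟩ else 0

/-- A partition: an antitone, eventually-zero sequence of naturals
(`toFun a` is `λ_{a+1}`, i.e. 0-indexed). -/
structure Ptn where
  toFun : ℕ → ℕ
  anti : ∀ i j : ℕ, i ≤ j → toFun j ≤ toFun i
  bdd : ∃ N, toFun N = 0

/-- The length (number of nonzero parts) of a partition. -/
noncomputable def Ptn.len (μ : Ptn) : ℕ := Nat.find μ.bdd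

/-- The Schur function of a partition. -/
noncomputable def Ptn.schurP (μ : Ptn) : MvPolynomial ℕ ℂ :=
  schur (fun a : Fin μ.len => μ.toFun a)

/-- `λ < μ` in the componentwise order, `λ` given as a finite tuple padded by zeros. -/
def PtnGt {l : ℕ} (lam : Fin l → ℕ) (μ : Ptn) : Prop :=
  (∀ i, pad lam i ≤ μ.toFun i) ∧ (∃ i, pad lam i ≠ μ.toFun i)

/-- The coefficients (as a formal power series in `t`) of
`τ(t) = s_λ(t) + Σ_{λ<μ} ξ_μ s_μ(t)`. -/
noncomputable def tauCoeff {l : ℕ} (lam : Fin l → ℕ) (ξ : Ptn → ℂ) (β : ℕ →₀ ℕ) : ℂ :=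
  MvPolynomial.coeff β (schur lam)
    + ∑ᶠ (μ : Ptn) (_ : PtnGt lam μ), ξ μ * MvPolynomial.coeff β μ.schurP

/-- The coefficients of
`τ^{(k)}(t) = s_{(λ_1,...,λ_k)}(t) + Σ_μ ξ_μ s_{(μ_1,...,μ_k)}(t)`,
the sum over partitions `μ` with `λ < μ` and `μ_i = λ_i` for `i ≥ k+1`. -/
noncomputable def tauKCoeff {l : ℕ} (lam : Fin l → ℕ) (ξ : Ptn → ℂ) (k : ℕ)
    (β : ℕ →₀ ℕ) : ℂ :=
  MvPolynomial.coeff β (schur (fun a : Fin k => pad lam a))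
    + ∑ᶠ (μ : Ptn) (_ : PtnGt lam μ ∧ ∀ i, k ≤ i → μ.toFun i = pad lam i),
        ξ μ * MvPolynomial.coeff β (schur (fun a : Fin k => μ.toFun a))

/-- Formal partial derivative `∂_i` on coefficient functions of power series in `t`. -/
noncomputable def pdCoeff (i : ℕ) (F : (ℕ →₀ ℕ) → ℂ) (β : ℕ →₀ ℕ) : ℂ :=
  ((β i : ℕ) + 1 : ℂ) * F (β + Finsupp.single i 1)

/-- Iterated formal derivative `∂_{i_1} ⋯ ∂_{i_r}` for `L = [i_1,...,i_r]`. -/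
noncomputable def derivsCoeff (L : List ℕ) (F : (ℕ →₀ ℕ) → ℂ) : (ℕ →₀ ℕ) → ℂ :=
  L.foldr pdCoeff F

/-- The power sum `(x_1^n + ⋯ + x_k^n)/n`. -/
noncomputable def psumC (k : ℕ) (n : ℕ) : MvPolynomial (Fin k) ℂ :=
  (n : ℂ)⁻¹ • ∑ i : Fin k, X i ^ n

/-- The coefficient of the monomial `γ` (in `x_1,...,x_k`) of a formal series in `t`
(given by its coefficient function `F`) after the substitution `t_n ↦ (x_1^n+⋯+x_k^n)/n`. -/
noncomputable def evalPS (k : ℕ) (F : (ℕ →₀ ℕ) → ℂ) (γ : Fin k →₀ ℕ) : ℂ :=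
  ∑ᶠ β : (ℕ →₀ ℕ), F β * MvPolynomial.coeff γ (∏ n ∈ β.support, psumC k n ^ β n)

/-! ### The generating series of the polynomials `pS` -/

/-- The series `∑_{n ≥ 1} t_n z^n`. -/
noncomputable def timeSeries : PowerSeries (MvPolynomial ℕ ℂ) :=
  PowerSeries.mk fun n => if 1 ≤ n then X n else 0

/-- The truncation of `timeSeries` to degrees at most `n`, as a finite sum. -/
noncomputable def timeSeriesTrunc (n : ℕ) : PowerSeries (MvPolynomial ℕ ℂ) :=
  ∑ i : Fin (n + 1), PowerSeries.C (if 1 ≤ (i : ℕ) then X (i : ℕ) else 0) * PowerSeries.X ^ (i : ℕ)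

lemma coeff_timeSeriesTrunc_pow (n m : ℕ) :
    PowerSeries.coeff n (timeSeries ^ m) = PowerSeries.coeff n (timeSeriesTrunc n ^ m) := by
  have h : (PowerSeries.X : PowerSeries (MvPolynomial ℕ ℂ)) ^ (n + 1) ∣
      timeSeries - timeSeriesTrunc n := by
    rw [PowerSeries.X_pow_dvd_iff]
    intro d hd
    rw [map_sub, sub_eq_zero, timeSeriesTrunc, map_sum, Finset.sum_eq_single (⟨d, hd⟩ : Fin (n + 1))]
    · simp [timeSeries]
    · intro b _ hb
      rw [PowerSeries.coeff_C_mul_X_pow, if_neg]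
      rintro rfl
      exact hb rfl
    · simp
  have h2 := PowerSeries.X_pow_dvd_iff.mp (h.trans (sub_dvd_pow_sub_pow _ _ m)) n (Nat.lt_succ_self n)
  rwa [map_sub, sub_eq_zero] at h2

lemma coeff_timeSeries_pow (n m : ℕ) :
    PowerSeries.coeff n (timeSeries ^ m) =
      ∑ c ∈ Finset.univ.filter
        (fun c : Fin m → Fin (n + 1) => (∑ j, ((c j : ℕ))) = n ∧ ∀ j, 1 ≤ (c j : ℕ)),
      ∏ j, X ((c j : ℕ)) := by
  have h : timeSeriesTrunc n ^ m = ∏ _j : Fin m, timeSeriesTrunc n := by simp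
  rw [coeff_timeSeriesTrunc_pow, h]
  simp only [timeSeriesTrunc]
  rw [Finset.prod_univ_sum, map_sum, Finset.sum_filter]
  simp only [Fintype.piFinset_univ]
  refine Finset.sum_congr rfl fun c _ => ?_
  rw [Finset.prod_mul_distrib, Finset.prod_pow_eq_pow_sum, ← map_prod,
    PowerSeries.coeff_C_mul_X_pow]
  by_cases h1 : ∀ j, 1 ≤ (c j : ℕ)
  · have : ∀ j, (if 1 ≤ (c j : ℕ) then X (c j : ℕ) else 0 : MvPolynomial ℕ ℂ) = X (c j : ℕ) :=
      fun j => if_pos (h1 j)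
    simp only [this, eq_true h1, and_true, eq_comm]
  · rw [if_neg (c := _ ∧ _) (fun h => h1 h.2)]
    push Not at h1
    obtain ⟨j, hj⟩ := h1
    rw [Finset.prod_eq_zero (Finset.mem_univ j) (if_neg (by omega)), ite_self]

lemma X_pow_dvd_timeSeries_pow (m : ℕ) :
    (PowerSeries.X : PowerSeries (MvPolynomial ℕ ℂ)) ^ m ∣ timeSeries ^ m := by
  refine pow_dvd_pow_of_dvd (PowerSeries.X_dvd_iff.mpr ?_) m
  simp [timeSeries, ← PowerSeries.coeff_zero_eq_constantCoeff_apply]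

lemma pS_eq_sum_coeff (n M : ℕ) (hM : n < M) :
    pS n = ∑ m ∈ Finset.range M,
      (Nat.factorial m : ℂ)⁻¹ • PowerSeries.coeff n (timeSeries ^ m) := by
  simp only [pS, ← coeff_timeSeries_pow]
  refine Finset.sum_subset (by simpa using hM) fun m _ hm => ?_
  rw [Finset.mem_range, not_lt] at hm
  rw [PowerSeries.X_pow_dvd_iff.mp (X_pow_dvd_timeSeries_pow m) n (by omega), smul_zero]

/-- The generating series `∑ p_n z^n`. -/
noncomputable def pSeries : PowerSeries (MvPolynomial ℕ ℂ) := PowerSeries.mk pS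

lemma derivative_pSeries :
    PowerSeries.derivative (MvPolynomial ℕ ℂ) pSeries =
      PowerSeries.derivative (MvPolynomial ℕ ℂ) timeSeries * pSeries := by
  ext1 n
  have hcongr : ∀ (f : PowerSeries (MvPolynomial ℕ ℂ)), PowerSeries.coeff n (f * pSeries) =
      PowerSeries.coeff n (f * ∑ m ∈ Finset.range (n + 1),
        (Nat.factorial m : ℂ)⁻¹ • timeSeries ^ m) := by
    intro f
    rw [PowerSeries.coeff_mul, PowerSeries.coeff_mul]
    refine Finset.sum_congr rfl fun p hp => ?_
    rw [Finset.HasAntidiagonal.mem_antidiagonal] at hp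
    congr 1
    simp only [pSeries, PowerSeries.coeff_mk, map_sum]
    rw [pS_eq_sum_coeff _ (n + 1) (by omega)]
    rfl
  rw [hcongr, PowerSeries.coeff_derivative, pSeries, PowerSeries.coeff_mk,
    pS_eq_sum_coeff (n + 1) (n + 2) (by omega), Finset.sum_mul, Finset.mul_sum, map_sum,
    Finset.sum_range_succ' _ (n + 1)]
  have h0 : PowerSeries.coeff (n + 1) (timeSeries ^ 0) = 0 := by
    simp [PowerSeries.coeff_one]
  rw [h0, smul_zero, zero_mul, add_zero]
  refine Finset.sum_congr rfl fun m _ => ?_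
  rw [smul_mul_assoc, ← Nat.cast_succ, Nat.cast_succ, ← PowerSeries.coeff_derivative,
    PowerSeries.derivative_pow, mul_smul_comm]
  have : PowerSeries.coeff n ((Nat.factorial m : ℂ)⁻¹ •
      (PowerSeries.derivative (MvPolynomial ℕ ℂ) timeSeries * timeSeries ^ m)) =
      (Nat.factorial m : ℂ)⁻¹ • PowerSeries.coeff n
      (PowerSeries.derivative (MvPolynomial ℕ ℂ) timeSeries * timeSeries ^ m) := rfl
  rw [this, Nat.add_sub_cancel, mul_assoc, mul_comm (timeSeries ^ m), ← nsmul_eq_mul, map_nsmul,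
    ← Nat.cast_smul_eq_nsmul ℂ, smul_smul]
  congr 1
  rw [Nat.factorial_succ]
  have := Nat.factorial_ne_zero m
  push_cast
  field_simp

lemma pS_zero : pS 0 = 1 := by
  rw [pS_eq_sum_coeff 0 1 (by omega)]
  simp

/-! ### Substituting `t = [x_1] + ⋯ + [x_k]` after a translation of `t_1` -/

/-- The substitution `t ↦ [x_1] + ⋯ + [x_k] + (s, 0, 0, …)`, `s` being the polynomial variable. -/
noncomputable def shiftHom (k : ℕ) :
    MvPolynomial ℕ ℂ →ₐ[ℂ] Polynomial (MvPolynomial (Fin k) ℂ) :=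
  aeval fun n => Polynomial.C (psumC k n) + if n = 1 then Polynomial.X else 0

lemma derivative_shiftHom (k : ℕ) (P : MvPolynomial ℕ ℂ) :
    Polynomial.derivative (shiftHom k P) = shiftHom k (pderiv 1 P) := by
  induction P using MvPolynomial.induction_on with
  | C a =>
    rw [pderiv_C, map_zero, shiftHom, aeval_C, IsScalarTower.algebraMap_apply ℂ
      (MvPolynomial (Fin k) ℂ), Polynomial.algebraMap_eq, Polynomial.derivative_C]
  | add p q hp hq => simp only [map_add, hp, hq]
  | mul_X p i hp =>
    have hX : Polynomial.derivative (shiftHom k (X i)) = shiftHom k (pderiv 1 (X i)) := by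
      simp only [shiftHom, aeval_X, pderiv_X, Pi.single_apply, map_add, Polynomial.derivative_C,
        zero_add]
      split_ifs <;> simp
    rw [map_mul, Polynomial.derivative_mul, pderiv_mul, map_add, map_mul, map_mul, hp, hX]

lemma coeff_zero_shiftHom (k : ℕ) (P : MvPolynomial ℕ ℂ) :
    (shiftHom k P).coeff 0 = aeval (psumC k) P := by
  induction P using MvPolynomial.induction_on with
  | C a =>
    rw [shiftHom, aeval_C, aeval_C, IsScalarTower.algebraMap_apply ℂ
      (MvPolynomial (Fin k) ℂ), Polynomial.algebraMap_eq, Polynomial.coeff_C_zero]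
  | add p q hp hq => simp only [map_add, Polynomial.coeff_add, hp, hq]
  | mul_X p i hp =>
    rw [map_mul, map_mul, Polynomial.mul_coeff_zero, hp]
    congr 1
    simp only [shiftHom, aeval_X]
    split_ifs <;> simp

/-- Taylor's formula in the direction `t_1`. -/
lemma aeval_iterate_pderiv (k N : ℕ) (P : MvPolynomial ℕ ℂ) :
    aeval (psumC k) ((pderiv 1)^[N] P) = (N.factorial : ℂ) • (shiftHom k P).coeff N := by
  have h : ∀ N, shiftHom k ((pderiv 1)^[N] P) = Polynomial.derivative^[N] (shiftHom k P) := by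
    intro N
    induction N with
    | zero => rfl
    | succ N ih => rw [Function.iterate_succ_apply', Function.iterate_succ_apply', ← ih,
        derivative_shiftHom]
  rw [← coeff_zero_shiftHom, h, Polynomial.coeff_iterate_derivative, zero_add,
    Nat.descFactorial_self, Nat.cast_smul_eq_nsmul]

/-- The polynomial `∏ (1 - x_i z)`, as a power series in `z`. -/
noncomputable def elemSeries (k : ℕ) : PowerSeries (Polynomial (MvPolynomial (Fin k) ℂ)) :=
  ∏ i : Fin k, (1 - PowerSeries.C (Polynomial.C (X i)) * PowerSeries.X)

lemma elemSeries_eq_coe (k : ℕ) : elemSeries k =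
    ((∏ i : Fin k, (1 - Polynomial.C (Polynomial.C (X i)) * Polynomial.X) :
      Polynomial (Polynomial (MvPolynomial (Fin k) ℂ))) : PowerSeries _) := by
  rw [elemSeries, ← Polynomial.coeToPowerSeries.ringHom_apply, map_prod]
  simp

lemma coeff_elemSeries_of_lt {k n : ℕ} (h : k < n) : PowerSeries.coeff n (elemSeries k) = 0 := by
  rw [elemSeries_eq_coe, Polynomial.coeff_coe]
  refine Polynomial.coeff_eq_zero_of_natDegree_lt (lt_of_le_of_lt ?_ h)
  refine (Polynomial.natDegree_prod_le _ _).trans ((Finset.sum_le_sum (g := fun _ => 1) ?_).trans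
    (by simp))
  intro i _
  compute_degree

lemma coeff_zero_elemSeries (k : ℕ) : PowerSeries.coeff 0 (elemSeries k) = 1 := by
  simp [elemSeries, map_prod]

lemma derivative_mul_eq {R : Type*} [CommRing R] (f g : PowerSeries R) :
    PowerSeries.derivative R (f * g) =
      f * PowerSeries.derivative R g + g * PowerSeries.derivative R f := by
  rw [Derivation.leibniz, smul_eq_mul, smul_eq_mul]

lemma derivative_prod_eq_neg_sum_mul {R ι : Type*} [CommRing R] (s : Finset ι)
    (f p : ι → PowerSeries R)
    (h : ∀ i ∈ s, PowerSeries.derivative R (f i) = -(p i * f i)) :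
    PowerSeries.derivative R (∏ i ∈ s, f i) = -((∑ i ∈ s, p i) * ∏ i ∈ s, f i) := by
  classical
  induction s using Finset.induction_on with
  | empty => simp
  | insert a s ha ih =>
    rw [Finset.prod_insert ha, Finset.sum_insert ha, derivative_mul_eq,
      ih fun i hi => h i (Finset.mem_insert_of_mem hi), h a (Finset.mem_insert_self a s)]
    ring

lemma derivative_one_sub_C_mul_X {R : Type*} [CommRing R] (x : R) :
    PowerSeries.derivative R (1 - PowerSeries.C x * PowerSeries.X) =
      -(PowerSeries.mk (fun n => x ^ (n + 1)) * (1 - PowerSeries.C x * PowerSeries.X)) := by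
  ext n
  rw [PowerSeries.coeff_derivative, mul_sub, mul_one, ← mul_assoc, mul_comm _ (PowerSeries.C x),
    mul_assoc]
  cases n with
  | zero => simp
  | succ n =>
    simp [PowerSeries.coeff_succ_mul_X, PowerSeries.coeff_one]
    ring

/-- The image of the generating series `∑ p_n z^n` under `shiftHom`. -/
noncomputable def shiftSeries (k : ℕ) : PowerSeries (Polynomial (MvPolynomial (Fin k) ℂ)) :=
  PowerSeries.map (shiftHom k : MvPolynomial ℕ ℂ →+* _) pSeries

lemma derivative_shiftSeries (k : ℕ) :
    PowerSeries.derivative _ (shiftSeries k) =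
      (∑ i : Fin k, PowerSeries.mk (fun n => Polynomial.C (X i) ^ (n + 1)) +
        PowerSeries.C Polynomial.X) * shiftSeries k := by
  have h : PowerSeries.derivative _ (shiftSeries k) =
      PowerSeries.map (shiftHom k : MvPolynomial ℕ ℂ →+* _)
        (PowerSeries.derivative _ pSeries) := by
    ext1 n
    simp [shiftSeries, PowerSeries.coeff_derivative]
  rw [h, derivative_pSeries, map_mul]
  congr 1
  ext1 n
  have hn : ((n : ℂ) + 1) ≠ 0 := Nat.cast_add_one_ne_zero n
  have hp : (psumC k (n + 1)) * ((n : MvPolynomial (Fin k) ℂ) + 1) = ∑ i, X i ^ (n + 1) := by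
    have : ((n : MvPolynomial (Fin k) ℂ) + 1) = C ((n : ℂ) + 1) := by simp
    rw [this, mul_comm, ← smul_eq_C_mul, psumC, smul_smul]
    push_cast
    rw [mul_inv_cancel₀ hn, one_smul]
  simp only [PowerSeries.coeff_map, PowerSeries.coeff_derivative, timeSeries, PowerSeries.coeff_mk,
    map_add, map_sum, shiftHom]
  rw [if_pos (by omega)]
  simp only [RingHom.coe_coe, map_mul, aeval_X, map_add, map_natCast, map_one,
    PowerSeries.coeff_C]
  simp only [← map_pow, ← map_sum, ← hp]
  rcases n with _ | n
  · simp
  · simp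

lemma coeff_shiftSeries_mul_elemSeries (k n : ℕ) :
    PowerSeries.coeff n (shiftSeries k * elemSeries k) =
      Polynomial.C (C (n.factorial : ℂ)⁻¹) * Polynomial.X ^ n := by
  have hE : PowerSeries.derivative _ (elemSeries k) = -((∑ i : Fin k,
      PowerSeries.mk (fun n => Polynomial.C (X i) ^ (n + 1))) * elemSeries k) :=
    derivative_prod_eq_neg_sum_mul _ _ _ fun i _ => derivative_one_sub_C_mul_X _
  have hD : PowerSeries.derivative _ (shiftSeries k * elemSeries k) =
      PowerSeries.C Polynomial.X * (shiftSeries k * elemSeries k) := by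
    rw [derivative_mul_eq, hE, derivative_shiftSeries]
    ring
  induction n with
  | zero =>
    rw [PowerSeries.coeff_mul]
    simp [shiftSeries, pSeries, pS_zero, coeff_zero_elemSeries]
  | succ n ih =>
    have h := congrArg (PowerSeries.coeff n) hD
    rw [PowerSeries.coeff_derivative, PowerSeries.coeff_C_mul, ih] at h
    have hn : ((n : ℂ) + 1) ≠ 0 := Nat.cast_add_one_ne_zero n
    have hn' : ((n : Polynomial (MvPolynomial (Fin k) ℂ)) + 1) =
        Polynomial.C (C ((n : ℂ) + 1)) := by simp
    have hn2 : ((n : Polynomial (MvPolynomial (Fin k) ℂ)) + 1) ≠ 0 := Nat.cast_add_one_ne_zero n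
    refine mul_right_cancel₀ hn2 (h.trans ?_)
    have hc : C (((n + 1).factorial : ℂ)⁻¹) * C ((n : ℂ) + 1) =
        (C (n.factorial : ℂ)⁻¹ : MvPolynomial (Fin k) ℂ) := by
      rw [← C_mul]
      congr 1
      rw [Nat.factorial_succ]
      have := Nat.factorial_ne_zero n
      push_cast
      field_simp
    rw [hn', ← hc, map_mul]
    ring

/-! ### The determinant after the column operations -/

/-- The image of `pz n` under `shiftHom`. -/
noncomputable def shiftCoeff (k : ℕ) (n : ℤ) : Polynomial (MvPolynomial (Fin k) ℂ) :=
  if 0 ≤ n then PowerSeries.coeff n.toNat (shiftSeries k) else 0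

lemma shiftHom_pz (k : ℕ) (n : ℤ) : shiftHom k (pz n) = shiftCoeff k n := by
  unfold pz shiftCoeff
  split_ifs
  · simp [shiftSeries, pSeries]
  · simp

/-- The inverse factorial `1 / n!`, extended by zero to negative integers. -/
noncomputable def invFactorial (n : ℤ) : ℂ := if 0 ≤ n then (n.toNat.factorial : ℂ)⁻¹ else 0

lemma sum_shiftCoeff_mul_elemSeries (k : ℕ) (d : ℤ) (j : ℕ) (hj : k ≤ j) :
    ∑ r ∈ Finset.range (j + 1), shiftCoeff k (d + j - r) * PowerSeries.coeff r (elemSeries k) =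
      Polynomial.C (C (invFactorial (d + j))) * Polynomial.X ^ (d + j).toNat := by
  generalize d + j = n
  by_cases hn : 0 ≤ n
  · lift n to ℕ using hn
    have hR : Polynomial.C (C (invFactorial n)) * Polynomial.X ^ (n : ℤ).toNat =
        PowerSeries.coeff n (elemSeries k * shiftSeries k) := by
      rw [mul_comm (elemSeries k), coeff_shiftSeries_mul_elemSeries]
      simp [invFactorial]
    rw [hR, PowerSeries.coeff_mul, Finset.Nat.sum_antidiagonal_eq_sum_range_succ
      (fun a b => PowerSeries.coeff a (elemSeries k) * PowerSeries.coeff b (shiftSeries k))]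
    have h1 : ∑ r ∈ Finset.range (j + 1),
        shiftCoeff k ((n : ℤ) - r) * PowerSeries.coeff r (elemSeries k) =
        ∑ r ∈ Finset.range (max n j + 1),
          shiftCoeff k ((n : ℤ) - r) * PowerSeries.coeff r (elemSeries k) := by
      refine Finset.sum_subset (Finset.range_subset_range.mpr (by omega)) fun r _ hr => ?_
      rw [coeff_elemSeries_of_lt (by simp at hr; omega), mul_zero]
    have h2 : ∑ r ∈ Finset.range (n + 1),
        shiftCoeff k ((n : ℤ) - r) * PowerSeries.coeff r (elemSeries k) =
        ∑ r ∈ Finset.range (max n j + 1),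
          shiftCoeff k ((n : ℤ) - r) * PowerSeries.coeff r (elemSeries k) := by
      refine Finset.sum_subset (Finset.range_subset_range.mpr (by omega)) fun r _ hr => ?_
      rw [shiftCoeff, if_neg (by simp at hr; omega), zero_mul]
    rw [h1, ← h2]
    refine Finset.sum_congr rfl fun r hr => ?_
    rw [Finset.mem_range] at hr
    rw [mul_comm, shiftCoeff, if_pos (by omega)]
    congr 3
    omega
  · rw [invFactorial, if_neg hn, map_zero, map_zero, zero_mul]
    refine Finset.sum_eq_zero fun r _ => ?_
    rw [shiftCoeff, if_neg (by omega), zero_mul]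

/-- The upper unitriangular matrix of the column operations. -/
noncomputable def columnOps (k m : ℕ) :
    Matrix (Fin m) (Fin m) (Polynomial (MvPolynomial (Fin k) ℂ)) :=
  Matrix.of fun i j =>
    if (j : ℕ) < k then if i = j then 1 else 0
    else if i ≤ j then PowerSeries.coeff ((j : ℕ) - i) (elemSeries k) else 0

lemma det_columnOps (k m : ℕ) : (columnOps k m).det = 1 := by
  rw [Matrix.det_of_isUpperTriangular]
  · refine Finset.prod_eq_one fun i _ => ?_
    rw [columnOps, Matrix.of_apply]
    rw [if_pos rfl, if_pos le_rfl, Nat.sub_self, coeff_zero_elemSeries, ite_self]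
  · intro i j hij
    have hij' : j < i := hij
    rw [columnOps, Matrix.of_apply, if_neg hij'.ne', if_neg hij'.not_ge, ite_self]

lemma shiftHom_schur (k m : ℕ) (μ : ℕ → ℕ) :
    shiftHom k (schur fun a : Fin m => μ a) = Matrix.det (Matrix.of fun a b : Fin m =>
      if (b : ℕ) < k then shiftCoeff k ((μ a : ℤ) - a + b)
      else Polynomial.C (C (invFactorial ((μ a : ℤ) - a + b))) *
        Polynomial.X ^ ((μ a : ℤ) - a + b).toNat) := by
  rw [schur, AlgHom.map_det, ← mul_one (Matrix.det _), ← det_columnOps k m, ← Matrix.det_mul]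
  congr 1
  ext1 a b
  rw [Matrix.mul_apply, Matrix.of_apply]
  simp only [AlgHom.mapMatrix_apply, Matrix.map_apply, Matrix.of_apply, shiftHom_pz, columnOps]
  by_cases hb : (b : ℕ) < k
  · simp [hb]
  · simp only [hb, if_false, Fin.le_def]
    rw [← sum_shiftCoeff_mul_elemSeries k _ b (by omega), ← Finset.sum_range_reflect,
      Fin.sum_univ_eq_sum_range (fun i => shiftCoeff k ((μ a : ℤ) - a + i) *
        if i ≤ (b : ℕ) then PowerSeries.coeff ((b : ℕ) - i) (elemSeries k) else 0) m]
    symm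
    have hsub : Finset.range ((b : ℕ) + 1) ⊆ Finset.range m :=
      Finset.range_subset_range.mpr b.2
    refine (Finset.sum_congr rfl fun i hi => ?_).trans (Finset.sum_subset hsub fun i _ hi => ?_)
    · rw [Finset.mem_range] at hi
      rw [if_pos (by omega), Nat.add_sub_cancel]
      congr 2
      push_cast [Nat.cast_sub (show i ≤ (b : ℕ) by omega)]
      ring
    · rw [Finset.mem_range] at hi
      rw [if_neg (by omega), mul_zero]

/-- The lowest coefficient of a determinant some of whose columns consist of monomials, when the
minimal exponent is attained only by block-preserving permutations. -/
lemma coeff_det_eq {A κ ρ : Type*} [CommRing A] [Fintype κ] [Fintype ρ] [DecidableEq κ]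
    [DecidableEq ρ] (M : Matrix (κ ⊕ ρ) (κ ⊕ ρ) (Polynomial A)) (a : κ ⊕ ρ → ρ → A)
    (e : κ ⊕ ρ → ρ → ℕ)
    (hM : ∀ x b, M x (Sum.inr b) = Polynomial.C (a x b) * Polynomial.X ^ e x b) (N₀ N : ℕ)
    (hN : N ≤ N₀)
    (hlt : ∀ σ : Equiv.Perm (κ ⊕ ρ), (∀ b, a (σ (Sum.inr b)) b ≠ 0) →
      (∃ b, (σ (Sum.inr b)).isLeft) → N₀ < ∑ b, e (σ (Sum.inr b)) b)
    (heq : ∀ σ : Equiv.Perm (κ ⊕ ρ), (∀ b, a (σ (Sum.inr b)) b ≠ 0) →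
      (∀ b, (σ (Sum.inr b)).isRight) → ∑ b, e (σ (Sum.inr b)) b = N₀) :
    M.det.coeff N = if N = N₀ then
      (Matrix.of fun i j => (M (Sum.inl i) (Sum.inl j)).coeff 0).det *
        (Matrix.of fun i j => a (Sum.inr i) j).det else 0 := by
  rw [← Matrix.det_fromBlocks_zero₁₂ _
    (Matrix.of fun i j => (M (Sum.inr i) (Sum.inl j)).coeff 0), Matrix.det_apply, Matrix.det_apply,
    Polynomial.finsetSum_coeff]
  have key : ∀ σ : Equiv.Perm (κ ⊕ ρ), (∏ x, M (σ x) x).coeff N = if N = N₀ then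
      ∏ x, Matrix.fromBlocks (Matrix.of fun i j => (M (Sum.inl i) (Sum.inl j)).coeff 0) 0
        (Matrix.of fun i j => (M (Sum.inr i) (Sum.inl j)).coeff 0)
        (Matrix.of fun i j => a (Sum.inr i) j) (σ x) x else 0 := by
    intro σ
    rw [Fintype.prod_sum_type, Fintype.prod_sum_type]
    simp only [hM]
    rw [Finset.prod_mul_distrib, Finset.prod_pow_eq_pow_sum, ← map_prod, ← mul_assoc,
      Polynomial.coeff_mul_X_pow']
    by_cases ha : ∀ b, a (σ (Sum.inr b)) b ≠ 0
    · by_cases hl : ∃ b, (σ (Sum.inr b)).isLeft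
      · rw [if_neg (by have := hlt σ ha hl; omega)]
        obtain ⟨b, hb⟩ := hl
        obtain ⟨y, hy⟩ := Sum.isLeft_iff.mp hb
        rw [Finset.prod_eq_zero (f := fun b => Matrix.fromBlocks _ _ _ _ (σ (Sum.inr b)) (Sum.inr b))
          (Finset.mem_univ b) (by rw [hy]; rfl), mul_zero, ite_self]
      · have hr : ∀ b, (σ (Sum.inr b)).isRight := by
          intro b
          by_contra hb
          exact hl ⟨b, by simpa using hb⟩
        rw [heq σ ha hr]
        by_cases hNN : N = N₀
        · subst hNN
          rw [if_pos le_rfl, if_pos rfl, Nat.sub_self, Polynomial.coeff_mul_C,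
            Polynomial.coeff_zero_prod]
          congr 1
          · refine Finset.prod_congr rfl fun i _ => ?_
            rcases σ (Sum.inl i) with y | y <;> rfl
          · refine Finset.prod_congr rfl fun i _ => ?_
            obtain ⟨y, hy⟩ := Sum.isRight_iff.mp (hr i)
            rw [hy]
            rfl
        · rw [if_neg (by omega), if_neg hNN]
    · push Not at ha
      obtain ⟨b, hb⟩ := ha
      rw [Finset.prod_eq_zero (f := fun b => a (σ (Sum.inr b)) b) (Finset.mem_univ b) hb]
      rw [Finset.prod_eq_zero (f := fun b => Matrix.fromBlocks _ _ _ _ (σ (Sum.inr b)) (Sum.inr b))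
          (Finset.mem_univ b), mul_zero, ite_self, map_zero, mul_zero, Polynomial.coeff_zero,
          ite_self]
      rcases h : σ (Sum.inr b) with y | y
      · rfl
      · rw [h] at hb
        exact hb
  simp only [Units.smul_def, Polynomial.coeff_smul, key, smul_ite, smul_zero]
  split_ifs
  · rfl
  · simp

/-! ### The lowest coefficient of a Schur function -/

lemma sum_inr_eq_of_isRight {κ ρ : Type*} [Fintype ρ]
    (σ : Equiv.Perm (κ ⊕ ρ)) (D : κ ⊕ ρ → ℤ) (hσ : ∀ b, (σ (Sum.inr b)).isRight) :
    ∑ b, D (σ (Sum.inr b)) = ∑ b, D (Sum.inr b) := by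
  choose τ hτ using fun b => Sum.isRight_iff.mp (hσ b)
  have hinj : Function.Injective τ := by
    intro x y hxy
    have : σ (Sum.inr x) = σ (Sum.inr y) := by rw [hτ, hτ, hxy]
    simpa using this
  simp only [hτ]
  exact (Equiv.ofBijective τ (Finite.injective_iff_bijective.mp hinj)).sum_comp
    fun b => D (Sum.inr b)

lemma sum_inr_lt_of_isLeft {κ ρ : Type*} [Fintype κ] [Fintype ρ]
    (σ : Equiv.Perm (κ ⊕ ρ)) (D : κ ⊕ ρ → ℤ) (hl : ∀ a, 0 < D (Sum.inl a))
    (hr : ∀ b, D (Sum.inr b) ≤ 0) (hσ : ∃ b, (σ (Sum.inr b)).isLeft) :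
    ∑ b, D (Sum.inr b) < ∑ b, D (σ (Sum.inr b)) := by
  have h1 : ∑ b, D (σ (Sum.inr b)) = ∑ x, if (σ.symm x).isRight then D x else 0 := by
    rw [← Equiv.sum_comp σ (fun x => if (σ.symm x).isRight then D x else 0),
      Fintype.sum_sum_type]
    simp
  have h2 : ∑ b, D (Sum.inr b) = ∑ x : κ ⊕ ρ, if x.isRight then D x else 0 := by
    rw [Fintype.sum_sum_type]
    simp
  rw [h1, h2]
  obtain ⟨b, hb⟩ := hσ
  refine Finset.sum_lt_sum ?_ ⟨σ (Sum.inr b), Finset.mem_univ _, ?_⟩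
  · rintro (a | b) -
    · have := hl a
      simp only [Sum.isRight_inl, Bool.false_eq_true, if_false]
      split_ifs <;> omega
    · have := hr b
      simp only [Sum.isRight_inr, if_true]
      split_ifs <;> omega
  · obtain ⟨a, ha⟩ := Sum.isLeft_iff.mp hb
    rw [Equiv.symm_apply_apply, ha]
    simpa using hl a

lemma invFactorial_ne_zero_iff {n : ℤ} : invFactorial n ≠ 0 ↔ 0 ≤ n := by
  unfold invFactorial
  split_ifs with h
  · simpa [h] using Nat.factorial_ne_zero _
  · simpa using h

lemma aeval_iterate_pderiv_schur (k r : ℕ) (μ : ℕ → ℕ) (hμ : Antitone μ) (N : ℕ)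
    (hN : N ≤ ∑ b : Fin r, μ (k + b)) :
    aeval (psumC k) ((pderiv 1)^[N] (schur fun a : Fin (k + r) => μ a)) =
      if N = ∑ b : Fin r, μ (k + b) then
        C ((N.factorial : ℂ) * (Matrix.of fun i j : Fin r =>
          invFactorial ((μ (k + i) : ℤ) - (k + i : ℕ) + (k + j : ℕ))).det) *
        aeval (psumC k) (schur fun a : Fin k => μ a)
      else 0 := by
  set pos : Fin k ⊕ Fin r → ℕ := fun x => (finSumFinEquiv x : ℕ) with hpos
  have hposl : ∀ a, pos (Sum.inl a) = a := fun a => by simp [hpos]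
  have hposr : ∀ b, pos (Sum.inr b) = k + b := fun b => by simp [hpos]
  set D : Fin k ⊕ Fin r → ℤ := fun x => ((μ (pos x) : ℤ) - pos x) - ((μ k : ℤ) - k) with hD
  have hDl : ∀ a, 0 < D (Sum.inl a) := fun a => by
    have := hμ a.2.le
    simp only [hD, hposl]
    omega
  have hDr : ∀ b, D (Sum.inr b) ≤ 0 := fun b => by
    have := hμ (Nat.le_add_right k b)
    simp only [hD, hposr]
    push_cast
    omega
  have hsum : ∀ σ : Equiv.Perm (Fin k ⊕ Fin r),
      (∀ b : Fin r, (C (invFactorial ((μ (pos (σ (Sum.inr b))) : ℤ) - pos (σ (Sum.inr b)) +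
        (k + b : ℕ))) : MvPolynomial (Fin k) ℂ) ≠ 0) →
      ((∑ b : Fin r, ((μ (pos (σ (Sum.inr b))) : ℤ) - pos (σ (Sum.inr b)) +
        (k + b : ℕ)).toNat : ℕ) : ℤ) =
        ((∑ b : Fin r, μ (k + b) : ℕ) : ℤ) +
          (∑ b, D (σ (Sum.inr b)) - ∑ b, D (Sum.inr b)) := by
    intro σ h
    push_cast
    rw [← Finset.sum_sub_distrib, ← Finset.sum_add_distrib]
    refine Finset.sum_congr rfl fun b _ => ?_
    have h0 := invFactorial_ne_zero_iff.mp (fun h' => h b (by rw [h', map_zero]))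
    push_cast at h0
    rw [Int.toNat_of_nonneg h0]
    simp only [hD, hposr]
    push_cast
    ring
  rw [aeval_iterate_pderiv, shiftHom_schur, ← Matrix.det_submatrix_equiv_self finSumFinEquiv,
    coeff_det_eq _ (fun x b => C (invFactorial ((μ (pos x) : ℤ) - pos x + (k + b : ℕ))))
      (fun x b => ((μ (pos x) : ℤ) - pos x + (k + b : ℕ)).toNat) ?_ _ N hN ?_ ?_]
  · split_ifs
    · rw [smul_eq_C_mul, map_mul, mul_assoc]
      congr 1
      rw [mul_comm]
      congr 1
      · rw [RingHom.map_det]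
        rfl
      · rw [schur, AlgHom.map_det]
        congr 1
        ext1 i j
        simp only [Matrix.submatrix_apply, Matrix.of_apply, AlgHom.mapMatrix_apply,
          Matrix.map_apply, ← coeff_zero_shiftHom, shiftHom_pz]
        simp
    · rw [smul_zero]
  · intro x b
    simp [hpos]
  · intro σ h1 h2
    have := hsum σ h1
    have := sum_inr_lt_of_isLeft σ D hDl hDr h2
    omega
  · intro σ h1 h2
    have := hsum σ h1
    have := sum_inr_eq_of_isRight σ D h2
    omega

lemma invFactorial_sub (w b : ℕ) : invFactorial ((w : ℤ) - b) =
    (w.factorial : ℂ)⁻¹ * (descPochhammer ℂ b).eval (w : ℂ) := by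
  rw [descPochhammer_eval_eq_descFactorial, invFactorial]
  have hw : (w.factorial : ℂ) ≠ 0 := by exact_mod_cast w.factorial_ne_zero
  split_ifs with h
  · have hb : b ≤ w := by omega
    have h1 : ((w : ℤ) - b).toNat = w - b := by omega
    have h2 : ((w - b).factorial : ℂ) ≠ 0 := by exact_mod_cast (w - b).factorial_ne_zero
    rw [h1, eq_inv_mul_iff_mul_eq₀ hw, ← Nat.factorial_mul_descFactorial hb]
    push_cast
    field_simp
  · rw [Nat.descFactorial_of_lt (by omega), Nat.cast_zero, mul_zero]

lemma det_invFactorial (r : ℕ) (w : ℕ → ℕ) :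
    (Matrix.of fun i j : Fin r => invFactorial ((w i : ℤ) - j)).det =
      (∏ i ∈ Finset.range r, ((w i).factorial : ℂ))⁻¹ *
        ∏ j ∈ Finset.range r, ∏ i ∈ Finset.range j, ((w j : ℂ) - w i) := by
  have h1 : (Matrix.of fun i j : Fin r => invFactorial ((w i : ℤ) - j)) =
      Matrix.of fun i j : Fin r => ((w i).factorial : ℂ)⁻¹ *
        (Matrix.of fun i j : Fin r => (descPochhammer ℂ j).eval (w i : ℂ)) i j := by
    ext i j
    simp [invFactorial_sub]
  rw [h1, Matrix.det_mul_column, ← Matrix.det_eval_matrixOfPolynomials_eq_det_vandermonde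
    (fun i : Fin r => (w i : ℂ)) _ (fun i => descPochhammer_natDegree ℂ i)
    (fun i => monic_descPochhammer ℂ i), Matrix.det_vandermonde, ← Finset.prod_inv_distrib,
    Fin.prod_univ_eq_prod_range (fun i => ((w i).factorial : ℂ)⁻¹) r]
  congr 1
  have h2 : ∀ i : Fin r, ∏ j ∈ Finset.Ioi i, ((w j : ℂ) - w i) =
      ∏ j : Fin r, if i < j then ((w j : ℂ) - w i) else 1 := fun i => by
    rw [← Finset.prod_filter]
    congr 1
    ext j
    simp
  simp only [h2]
  rw [Finset.prod_comm, ← Fin.prod_univ_eq_prod_range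
    (fun j => ∏ i ∈ Finset.range j, ((w j : ℂ) - w i)) r]
  refine Finset.prod_congr rfl fun j _ => ?_
  simp only [Fin.lt_def]
  rw [Fin.prod_univ_eq_prod_range (fun i => if i < (j : ℕ) then ((w j : ℂ) - w i) else 1) r,
    ← Finset.prod_filter]
  congr 1
  ext i
  have := j.2
  simp only [Finset.mem_filter, Finset.mem_range]
  omega

lemma det_invFactorial_partition (k r : ℕ) (μ : ℕ → ℕ) :
    (Matrix.of fun i j : Fin r =>
      invFactorial ((μ (k + i) : ℤ) - (k + i : ℕ) + (k + j : ℕ))).det =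
      (∏ i ∈ Finset.range r, ((μ (k + r - 1 - i) + i).factorial : ℂ))⁻¹ *
        ∏ j ∈ Finset.range r, ∏ i ∈ Finset.range j,
          (((μ (k + r - 1 - j) + j : ℕ) : ℂ) - ((μ (k + r - 1 - i) + i : ℕ) : ℂ)) := by
  rw [← det_invFactorial r fun i => μ (k + r - 1 - i) + i,
    ← Matrix.det_submatrix_equiv_self Fin.revPerm]
  congr 1
  ext i j
  have h : k + (r - (i + 1)) = k + r - 1 - (i : ℕ) := by omega
  simp only [Matrix.submatrix_apply, Matrix.of_apply, Fin.revPerm_apply, Fin.val_rev, h]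
  congr 1
  push_cast
  omega

/-! ### Homogeneity -/

/-- The weight of a monomial in `t`, the variable `t_n` having weight `n`. -/
noncomputable abbrev timeWeight : (ℕ →₀ ℕ) →+ ℤ := Finsupp.weight (fun n : ℕ => (n : ℤ))

lemma isWeightedHomogeneous_pS (n : ℕ) :
    IsWeightedHomogeneous (fun n : ℕ => (n : ℤ)) (pS n) (n : ℤ) := by
  refine IsWeightedHomogeneous.sum _ _ _ fun m _ => ?_
  rw [smul_eq_C_mul]
  refine IsWeightedHomogeneous.C_mul (IsWeightedHomogeneous.sum _ _ _ fun c hc => ?_) _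
  have h := IsWeightedHomogeneous.prod Finset.univ (fun j => (X (c j : ℕ) : MvPolynomial ℕ ℂ))
    (fun j => ((c j : ℕ) : ℤ)) fun j _ => isWeightedHomogeneous_X ℂ (fun n : ℕ => (n : ℤ)) _
  rwa [← Nat.cast_sum, (Finset.mem_filter.mp hc).2.1] at h

lemma isWeightedHomogeneous_pz (n : ℤ) :
    IsWeightedHomogeneous (fun n : ℕ => (n : ℤ)) (pz n) n := by
  unfold pz
  split_ifs with h
  · simpa [h] using isWeightedHomogeneous_pS n.toNat
  · exact isWeightedHomogeneous_zero ℂ _ _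

lemma isWeightedHomogeneous_schur {m : ℕ} (μ : Fin m → ℕ) :
    IsWeightedHomogeneous (fun n : ℕ => (n : ℤ)) (schur μ) (∑ a, (μ a : ℤ)) := by
  rw [schur, Matrix.det_apply']
  refine IsWeightedHomogeneous.sum _ _ _ fun σ _ => ?_
  rw [← map_intCast (C : ℂ →+* MvPolynomial ℕ ℂ)]
  refine IsWeightedHomogeneous.C_mul ?_ _
  have h : ∑ a, (μ a : ℤ) = ∑ a, ((μ (σ a) : ℤ) - ((σ a : ℕ) : ℤ) + ((a : ℕ) : ℤ)) := by
    rw [Finset.sum_add_distrib, Finset.sum_sub_distrib, Equiv.sum_comp σ (fun a => (μ a : ℤ)),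
      Equiv.sum_comp σ (fun a => ((a : ℕ) : ℤ)), sub_add_cancel]
  rw [h]
  exact IsWeightedHomogeneous.prod _ _ _ fun a _ => isWeightedHomogeneous_pz _

lemma timeWeight_eq_of_coeff_prod_psumC_ne_zero {k : ℕ} {γ : Fin k →₀ ℕ} {β : ℕ →₀ ℕ}
    (h : coeff γ (∏ n ∈ β.support, psumC k n ^ β n) ≠ 0) : timeWeight β = γ.degree := by
  have hp : ∀ n, (psumC k n).IsHomogeneous n := fun n => by
    rw [psumC, smul_eq_C_mul]
    exact IsHomogeneous.C_mul (IsHomogeneous.sum _ _ _ fun i _ => isHomogeneous_X_pow i n) _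
  have := (IsHomogeneous.prod β.support (fun n => psumC k n ^ β n) (fun n => n * β n)
    fun n _ => (hp n).pow (β n)).coeff_eq_zero (d := γ)
  rw [Finsupp.weight_apply, Finsupp.sum]
  by_contra hne
  refine h (this fun h' => hne ?_)
  rw [h']
  push_cast
  exact Finset.sum_congr rfl fun n _ => by rw [nsmul_eq_mul, mul_comm]

/-! ### Evaluation of coefficient functions -/

lemma evalPS_congr {k : ℕ} {γ : Fin k →₀ ℕ} {F G : (ℕ →₀ ℕ) → ℂ}
    (h : ∀ β, timeWeight β = γ.degree → F β = G β) : evalPS k F γ = evalPS k G γ := by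
  refine finsum_congr fun β => ?_
  by_cases h0 : coeff γ (∏ n ∈ β.support, psumC k n ^ β n) = 0
  · rw [h0, mul_zero, mul_zero]
  · rw [h β (timeWeight_eq_of_coeff_prod_psumC_ne_zero h0)]

lemma evalPS_coeff (k : ℕ) (P : MvPolynomial ℕ ℂ) (γ : Fin k →₀ ℕ) :
    evalPS k (fun β => coeff β P) γ = coeff γ (aeval (psumC k) P) := by
  rw [evalPS, finsum_eq_sum_of_support_subset (s := P.support), aeval_def, eval₂_eq, coeff_sum]
  · refine Finset.sum_congr rfl fun β _ => ?_
    rw [algebraMap_eq, coeff_C_mul]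
  · intro β hβ
    rw [Finset.mem_coe, mem_support_iff]
    exact left_ne_zero_of_mul hβ

lemma derivsCoeff_replicate_coeff (N : ℕ) (P : MvPolynomial ℕ ℂ) :
    derivsCoeff (List.replicate N 1) (fun β => coeff β P) =
      fun β => coeff β ((pderiv 1)^[N] P) := by
  induction N with
  | zero => rfl
  | succ N ih =>
    rw [derivsCoeff] at ih
    rw [derivsCoeff, List.replicate_succ, List.foldr_cons, ih, Function.iterate_succ_apply']
    funext β
    rw [pdCoeff, coeff_pderiv, mul_comm]

lemma derivsCoeff_replicate_congr (N : ℕ) {F G : (ℕ →₀ ℕ) → ℂ} {β : ℕ →₀ ℕ}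
    (h : F (β + Finsupp.single 1 N) = G (β + Finsupp.single 1 N)) :
    derivsCoeff (List.replicate N 1) F β = derivsCoeff (List.replicate N 1) G β := by
  induction N generalizing β with
  | zero => simpa [derivsCoeff] using h
  | succ N ih =>
    rw [derivsCoeff, derivsCoeff, List.replicate_succ, List.foldr_cons, List.foldr_cons, pdCoeff,
      pdCoeff]
    congr 1
    refine ih ?_
    rwa [add_assoc, ← Finsupp.single_add, Nat.add_comm 1 N]

/-! ### Partitions -/

lemma Ptn.toFun_antitone (μ : Ptn) : Antitone μ.toFun := fun _ _ h => μ.anti _ _ h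

lemma Ptn.toFun_eq_zero_iff (μ : Ptn) {i : ℕ} : μ.toFun i = 0 ↔ μ.len ≤ i :=
  ⟨fun h => Nat.find_min' μ.bdd h,
    fun h => Nat.le_zero.mp ((μ.anti _ _ h).trans (Nat.find_spec μ.bdd).le)⟩

lemma Ptn.finite_box (D : ℕ) : {μ : Ptn | μ.toFun 0 ≤ D ∧ μ.toFun D = 0}.Finite := by
  refine Set.Finite.of_finite_image (f := fun μ : Ptn => fun i : Fin D =>
    Fin.ofNat (D + 1) (μ.toFun i)) (Set.toFinite _) ?_
  rintro ⟨f, hf, hf0⟩ ⟨h1, h2⟩ ⟨g, hg, hg0⟩ ⟨h3, h4⟩ h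
  simp only at h1 h2 h3 h4 h
  congr 1
  funext i
  by_cases hi : i < D
  · have := congrArg Fin.val (congrFun h ⟨i, hi⟩)
    simp only [Fin.val_ofNat] at this
    rwa [Nat.mod_eq_of_lt, Nat.mod_eq_of_lt] at this
    · have := hg 0 i (Nat.zero_le i)
      omega
    · have := hf 0 i (Nat.zero_le i)
      omega
  · have := hf D i (by omega)
    have := hg D i (by omega)
    omega

lemma Ptn.sum_eq_of_coeff_schurP_ne_zero {μ : Ptn} {β : ℕ →₀ ℕ} (h : coeff β μ.schurP ≠ 0) :
    ((∑ a : Fin μ.len, μ.toFun a : ℕ) : ℤ) = timeWeight β := by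
  push_cast
  exact (isWeightedHomogeneous_schur (fun a : Fin μ.len => μ.toFun a) h).symm

lemma Ptn.mem_box_of_sum_le {μ : Ptn} {D : ℕ} (h : ∑ a : Fin μ.len, μ.toFun a ≤ D) :
    μ.toFun 0 ≤ D ∧ μ.toFun D = 0 := by
  have hlen : μ.len ≤ D := by
    refine le_trans ?_ h
    have : ∑ _a : Fin μ.len, 1 ≤ ∑ a : Fin μ.len, μ.toFun a := Finset.sum_le_sum fun a _ =>
      Nat.one_le_iff_ne_zero.mpr fun h0 => absurd (μ.toFun_eq_zero_iff.mp h0) (not_le.mpr a.2)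
    simpa using this
  refine ⟨?_, μ.toFun_eq_zero_iff.mpr hlen⟩
  by_cases h0 : 0 < μ.len
  · exact (Finset.single_le_sum (f := fun a : Fin μ.len => μ.toFun a) (fun _ _ => Nat.zero_le _)
      (Finset.mem_univ ⟨0, h0⟩)).trans h
  · rw [μ.toFun_eq_zero_iff.mpr (by omega)]
    exact Nat.zero_le D

section

variable {l : ℕ} {lam : Fin l → ℕ}

lemma pad_eq_zero {i : ℕ} (h : l ≤ i) : pad lam i = 0 := dif_neg (not_lt.mpr h)

lemma pad_fin (i : Fin l) : pad lam i = lam i := dif_pos i.2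

lemma antitone_pad (hanti : Antitone lam) : Antitone (pad lam) := by
  intro i j hij
  by_cases hj : j < l
  · rw [pad, pad, dif_pos hj, dif_pos (hij.trans_lt hj)]
    exact hanti hij
  · rw [pad_eq_zero (not_lt.mp hj)]
    exact Nat.zero_le _

lemma le_len_of_PtnGt (hpos : ∀ i, 1 ≤ lam i) {μ : Ptn} (h : PtnGt lam μ) : l ≤ μ.len := by
  by_contra hl
  have h1 := h.1 μ.len
  rw [μ.toFun_eq_zero_iff.mpr le_rfl, pad, dif_pos (not_le.mp hl)] at h1
  have := hpos ⟨μ.len, not_le.mp hl⟩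
  omega

lemma sum_Ico_eq_sum_fin (k r : ℕ) (f : ℕ → ℕ) :
    ∑ a ∈ Finset.Ico k (k + r), f a = ∑ b : Fin r, f (k + b) := by
  rw [Finset.sum_Ico_eq_sum_range, Nat.add_sub_cancel_left,
    Fin.sum_univ_eq_sum_range (fun b => f (k + b))]

lemma aeval_iterate_pderiv_schur_lam {k N r : ℕ} (hr : l = k + r)
    (hN : N = ∑ a ∈ Finset.Ico k l, pad lam a) {c : ℂ}
    (hc : c = (Nat.factorial N : ℂ)
          / (∏ i ∈ Finset.range (l - k), (Nat.factorial (pad lam (l - 1 - i) + i) : ℂ))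
        * ∏ j ∈ Finset.range (l - k), ∏ i ∈ Finset.range j,
            (((pad lam (l - 1 - j) + j : ℕ) : ℂ) - ((pad lam (l - 1 - i) + i : ℕ) : ℂ)))
    (μ : ℕ → ℕ) (hμ : Antitone μ) (hk : ∀ i, k ≤ i → μ i = pad lam i) :
    aeval (psumC k) ((pderiv 1)^[N] (schur fun a : Fin l => μ a)) =
      C c * aeval (psumC k) (schur fun a : Fin k => μ a) := by
  subst hr
  have hN' : N = ∑ b : Fin r, μ (k + b) := by
    rw [hN, sum_Ico_eq_sum_fin]
    exact Finset.sum_congr rfl fun b _ => (hk _ (Nat.le_add_right _ _)).symm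
  have hsub : k + r - k = r := by omega
  have h := aeval_iterate_pderiv_schur k r μ hμ N hN'.le
  rw [if_pos hN'] at h
  have hcc : (N.factorial : ℂ) * (Matrix.of fun i j : Fin r =>
      invFactorial ((μ (k + i) : ℤ) - (k + i : ℕ) + (k + j : ℕ))).det = c := by
    simp only [fun i : Fin r => hk (k + i) (Nat.le_add_right _ _)]
    rw [det_invFactorial_partition, hc, hsub]
    ring
  rw [hcc] at h
  exact h

lemma aeval_iterate_pderiv_schurP (hpos : ∀ i, 1 ≤ lam i) {k N : ℕ} (hkl : k ≤ l)
    (hN : N = ∑ a ∈ Finset.Ico k l, pad lam a) {μ : Ptn} (hμ : PtnGt lam μ)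
    (hk : ¬ ∀ i, k ≤ i → μ.toFun i = pad lam i) :
    aeval (psumC k) ((pderiv 1)^[N] μ.schurP) = 0 := by
  have hlen := le_len_of_PtnGt hpos hμ
  obtain ⟨r, hr⟩ := Nat.exists_eq_add_of_le (hkl.trans hlen)
  push Not at hk
  obtain ⟨i, hi, hne⟩ := hk
  have hlt : pad lam i < μ.toFun i := lt_of_le_of_ne (hμ.1 i) hne.symm
  have hi' : i < μ.len := by
    by_contra h
    rw [μ.toFun_eq_zero_iff.mpr (not_lt.mp h)] at hlt
    omega
  have hNlt : N < ∑ b : Fin r, μ.toFun (k + b) := by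
    rw [← sum_Ico_eq_sum_fin k r μ.toFun, ← hr, hN]
    refine (Finset.sum_le_sum_of_subset (Finset.Ico_subset_Ico_right hlen)).trans_lt
      (Finset.sum_lt_sum (fun i _ => hμ.1 i) ⟨i, Finset.mem_Ico.mpr ⟨hi, hi'⟩, hlt⟩)
  have h := aeval_iterate_pderiv_schur k r μ.toFun μ.toFun_antitone N hNlt.le
  rw [if_neg hNlt.ne] at h
  rw [Ptn.schurP, hr, h]

lemma schurP_eq_of_forall_le (hpos : ∀ i, 1 ≤ lam i) {k : ℕ} (hkl : k ≤ l) {μ : Ptn}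
    (hμ : PtnGt lam μ) (hk : ∀ i, k ≤ i → μ.toFun i = pad lam i) :
    μ.schurP = schur fun a : Fin l => μ.toFun a := by
  have hlen : μ.len = l := le_antisymm
    (μ.toFun_eq_zero_iff.mp ((hk l hkl).trans (pad_eq_zero le_rfl))) (le_len_of_PtnGt hpos hμ)
  rw [Ptn.schurP, hlen]

end

open Classical in
lemma exists_finset_tauCoeff_eq {l : ℕ} (lam : Fin l → ℕ) (ξ : Ptn → ℂ) (k W V : ℕ) :
    ∃ S : Finset Ptn,
      (∀ β, timeWeight β = W → tauCoeff lam ξ β = coeff β (schur lam +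
        ∑ μ ∈ S.filter (PtnGt lam), ξ μ • μ.schurP)) ∧
      (∀ β, timeWeight β = V → tauKCoeff lam ξ k β =
        coeff β (schur (fun a : Fin k => pad lam a) +
          ∑ μ ∈ S.filter (fun μ => PtnGt lam μ ∧ ∀ i, k ≤ i → μ.toFun i = pad lam i),
            ξ μ • schur (fun a : Fin k => μ.toFun a))) := by
  set D := W + V + k + l + pad lam k with hD
  refine ⟨(Ptn.finite_box D).toFinset, fun β hβ => ?_, fun β hβ => ?_⟩
  · simp only [tauCoeff, coeff_add, coeff_sum, coeff_smul, smul_eq_mul]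
    rw [finsum_cond_eq_sum_of_cond_iff]
    intro μ hμ
    have hsum := Ptn.sum_eq_of_coeff_schurP_ne_zero (right_ne_zero_of_mul hμ)
    rw [hβ] at hsum
    simpa using fun _ => Ptn.mem_box_of_sum_le (D := D) (by omega)
  · simp only [tauKCoeff, coeff_add, coeff_sum, coeff_smul, smul_eq_mul]
    rw [finsum_cond_eq_sum_of_cond_iff]
    intro μ hμ
    have hsum := isWeightedHomogeneous_schur (fun a : Fin k => μ.toFun a)
      (right_ne_zero_of_mul hμ)
    have hsum' : ((∑ a : Fin k, μ.toFun a : ℕ) : ℤ) = V := by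
      push_cast
      exact hsum.symm.trans hβ
    simp only [Finset.mem_filter, Set.Finite.mem_toFinset, Set.mem_ofPred_eq]
    refine ⟨fun h => ⟨⟨?_, ?_⟩, h⟩, fun h => h.2⟩
    · by_cases hk : 0 < k
      · have := Finset.single_le_sum (f := fun a : Fin k => μ.toFun a) (fun _ _ => Nat.zero_le _)
          (Finset.mem_univ ⟨0, hk⟩)
        simp only at this
        omega
      · obtain rfl : k = 0 := by omega
        rw [h.2 0 le_rfl]
        omega
    · rw [h.2 D (by omega), pad_eq_zero (by omega)]

/-- Let `λ` be a partition of length `l`, `ξ_μ ∈ ℂ` arbitrary,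
`τ(t) = s_λ(t) + Σ_{λ<μ} ξ_μ s_μ(t)` and, for `0 ≤ k ≤ l`,
`τ^{(k)}(t) = s_{(λ_1,...,λ_k)}(t) + Σ_μ ξ_μ s_{(μ_1,...,μ_k)}(t)` (the sum over
partitions `μ = (μ_1,...,μ_l)` with `λ < μ` and `μ_i = λ_i` for `k+1 ≤ i ≤ l`). Then
`∂_1^{N_{λ,k}} τ` at `t = [x_1]+⋯+[x_k]` equals `c'_{λ,k} · τ^{(k)}([x_1]+⋯+[x_k])`
as formal power series in `x_1,...,x_k`, where
`c'_{λ,k} = (N_{λ,k}! / Π_{i=1}^{l-k} w_i!) · Π_{1≤i<j≤l-k} (w_j - w_i)` with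
`(w_l,...,w_1) = (λ_1,...,λ_l) + (l-1,...,1,0)` (so `w_{i+1} = pad lam (l-1-i) + i`). -/
theorem statement19 (l : ℕ) (lam : Fin l → ℕ)
    (hanti : Antitone lam) (hpos : ∀ i, 1 ≤ lam i)
    (ξ : Ptn → ℂ) (k : ℕ) (hk : k ≤ l)
    (N : ℕ) (hN : N = ∑ a ∈ Finset.Ico k l, pad lam a)
    (c : ℂ)
    (hc : c = (Nat.factorial N : ℂ)
          / (∏ i ∈ Finset.range (l - k), (Nat.factorial (pad lam (l - 1 - i) + i) : ℂ))
        * ∏ j ∈ Finset.range (l - k), ∏ i ∈ Finset.range j,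
            (((pad lam (l - 1 - j) + j : ℕ) : ℂ) - ((pad lam (l - 1 - i) + i : ℕ) : ℂ)))
    (γ : Fin k →₀ ℕ) :
    evalPS k (derivsCoeff (List.replicate N 1) (tauCoeff lam ξ)) γ
      = c * evalPS k (tauKCoeff lam ξ k) γ := by
  classical
  obtain ⟨S, hS, hSk⟩ := exists_finset_tauCoeff_eq lam ξ k (γ.degree + N) γ.degree
  obtain ⟨r, hr⟩ := Nat.exists_eq_add_of_le hk
  have hL : evalPS k (derivsCoeff (List.replicate N 1) (tauCoeff lam ξ)) γ =
      coeff γ (aeval (psumC k) ((pderiv 1)^[N] (schur lam +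
        ∑ μ ∈ S.filter (PtnGt lam), ξ μ • μ.schurP))) := by
    rw [← evalPS_coeff, ← derivsCoeff_replicate_coeff]
    refine evalPS_congr fun β hβ => derivsCoeff_replicate_congr N (hS _ ?_)
    rw [map_add, hβ, Finsupp.weight_apply, Finsupp.sum_single_index (by simp)]
    simp
  rw [hL, evalPS_congr hSk, evalPS_coeff, ← coeff_C_mul]
  congr 1
  set Φ : MvPolynomial ℕ ℂ →ₗ[ℂ] MvPolynomial (Fin k) ℂ :=
    (aeval (psumC k)).toLinearMap ∘ₗ ((pderiv 1 : Derivation ℂ (MvPolynomial ℕ ℂ) _) :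
      MvPolynomial ℕ ℂ →ₗ[ℂ] MvPolynomial ℕ ℂ) ^ N with hΦ
  have hΦ_apply : ∀ P, Φ P = aeval (psumC k) ((pderiv 1)^[N] P) := fun P => by
    rw [hΦ, LinearMap.comp_apply, Module.End.pow_apply]
    rfl
  have hlam : schur lam = schur fun a : Fin l => pad lam a := by
    simp only [pad_fin]
  rw [← hΦ_apply, map_add, map_sum, map_add, map_sum, mul_add, hΦ_apply, hlam,
    aeval_iterate_pderiv_schur_lam hr hN hc (pad lam) (antitone_pad hanti) fun _ _ => rfl,
    ← Finset.filter_filter,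
    Finset.sum_filter (fun μ : Ptn => ∀ i, k ≤ i → μ.toFun i = pad lam i), Finset.mul_sum]
  congr 1
  refine Finset.sum_congr rfl fun μ hμ => ?_
  have hgt := (Finset.mem_filter.mp hμ).2
  rw [map_smul, hΦ_apply]
  split_ifs with h
  · rw [schurP_eq_of_forall_le hpos hk hgt h,
      aeval_iterate_pderiv_schur_lam hr hN hc _ μ.toFun_antitone h, map_smul, mul_smul_comm]
  · rw [aeval_iterate_pderiv_schurP hpos hk hN hgt h, smul_zero, mul_zero]
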